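/- For every integer r ≥ 1, \overline{t^{-r} u\,dt} = ∑_{k=1}^{n} Q_{r,−k}·ω_k in Ω¹_R/dR. -/

import Mathlib

open Polynomial LaurentPolynomial

noncomputable section

variable (n : ℕ) (a : ℕ → ℂ)

/-- The polynomial `p(t) = aₙtⁿ + ... + a₁t + a₀`. -/
def pPoly : Polynomial ℂ := ∑ i ∈ Finset.range (n + 1), Polynomial.C (a i) * Polynomial.X ^ i

/-- The hyperelliptic ring `R = ℂ[t,t⁻¹][u]/(u² - p(t))`. -/
abbrev HyperRing : Type :=
  AdjoinRoot ((Polynomial.X : Polynomial (LaurentPolynomial ℂ)) ^ 2 -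
    Polynomial.C ((pPoly n a).toLaurent))

/-- The element `tⁱ` of `R`, for `i : ℤ`. -/
abbrev tpow (i : ℤ) : HyperRing n a :=
  algebraMap (LaurentPolynomial ℂ) (HyperRing n a) (LaurentPolynomial.T i)

/-- The element `u` of `R`. -/
abbrev uElt : HyperRing n a := AdjoinRoot.root _

/-- The subspace `dR` of exact differentials inside the Kähler differentials `Ω¹_R`. -/
abbrev dR : Submodule ℂ (Ω[HyperRing n a⁄ℂ]) :=
  LinearMap.range (KaehlerDifferential.D ℂ (HyperRing n a)).toLinearMap

/-- The quotient `Ω¹_R/dR`. -/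
abbrev OmegaQ := Ω[HyperRing n a⁄ℂ] ⧸ dR n a

/-- The class of a Kähler differential in `Ω¹_R/dR`. -/
abbrev cl (ω : Ω[HyperRing n a⁄ℂ]) : OmegaQ n a := Submodule.Quotient.mk ω

/-- The class `\overline{f dg}` in `Ω¹_R/dR`. -/
abbrev fdg (f g : HyperRing n a) : OmegaQ n a :=
  cl n a (f • KaehlerDifferential.D ℂ (HyperRing n a) g)

/-- `ω₀ = class of t⁻¹ dt`. -/
abbrev ω0 : OmegaQ n a := fdg n a (tpow n a (-1)) (tpow n a 1)

/-- `ω_k = class of t⁻ᵏ u dt`. -/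
abbrev ωk (k : ℕ) : OmegaQ n a := fdg n a (tpow n a (-(k : ℤ)) * uElt n a) (tpow n a 1)

/-! The form `d(2 t^{1-m} u³)` equals `∑ⱼ (3j - 2m + 2) aⱼ t^{j-m} u dt`: write it as
`3 t^{1-m} u d(u²) + 2(1-m) t^{-m} u · u² dt` and substitute `u² = ∑ⱼ aⱼ tʲ`. Modulo exact forms,
the classes of `t^{-m} u dt` therefore satisfy the recurrence that defines `Q`. Its leading
coefficient `-2(m-1) a₀` is invertible for `m > n ≥ 1`, so a solution is determined by its values
at `1, …, n`. -/

section Recurrence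

variable {R N : Type*} [Ring R] [AddCommGroup N] [Module R N] {d : ℕ} {c : ℤ → ℕ → R}

/-- A sequence `x` satisfies the linear recurrence of order `d` with variable coefficients
`c m j`, namely `∑_{j=0}^{d} c m j • x (m - j) = 0`, at every index `m > d`. -/
def SatisfiesRecurrence (d : ℕ) (c : ℤ → ℕ → R) (x : ℤ → N) : Prop :=
  ∀ m : ℤ, (d : ℤ) + 1 ≤ m → ∑ j ∈ Finset.range (d + 1), c m j • x (m - j) = 0

lemma satisfiesRecurrence_iff {x : ℤ → N} :
    SatisfiesRecurrence d c x ↔ ∀ m : ℤ, (d : ℤ) + 1 ≤ m →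
      c m 0 • x m = -∑ j ∈ Finset.Icc 1 d, c m j • x (m - j) := by
  refine forall₂_congr fun m _ => ?_
  rw [Finset.sum_range_eq_add_Ico _ d.add_one_pos, Finset.Ico_add_one_right_eq_Icc,
    Nat.cast_zero, sub_zero, eq_neg_iff_add_eq_zero]

lemma SatisfiesRecurrence.sum_smul {ι : Type*} {s : Finset ι} {q : ι → ℤ → R}
    (hq : ∀ i ∈ s, SatisfiesRecurrence d c (q i)) (v : ι → N) :
    SatisfiesRecurrence d c fun m => ∑ i ∈ s, q i m • v i := by
  intro m hm
  simp only [Finset.smul_sum, smul_smul]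
  rw [Finset.sum_comm]
  refine Finset.sum_eq_zero fun i hi => ?_
  rw [← Finset.sum_smul]
  exact (congrArg (· • v i) (hq i hi m hm)).trans (zero_smul R (v i))

lemma SatisfiesRecurrence.eq_of_eq_initial {x y : ℤ → N} (hx : SatisfiesRecurrence d c x)
    (hy : SatisfiesRecurrence d c y) (hc : ∀ m : ℤ, (d : ℤ) + 1 ≤ m → IsSMulRegular N (c m 0))
    (hxy : ∀ m : ℤ, 1 ≤ m → m ≤ d → x m = y m) {r : ℤ} (hr : 1 ≤ r) : x r = y r := by
  induction r using Int.strongRec (m := (d : ℤ) + 1) with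
  | lt r hrd => exact hxy r hr (Int.lt_add_one_iff.1 hrd)
  | ge r hrd ih =>
    refine hc r hrd ?_
    beta_reduce
    rw [satisfiesRecurrence_iff.1 hx r hrd, satisfiesRecurrence_iff.1 hy r hrd]
    refine congrArg Neg.neg (Finset.sum_congr rfl fun j hj => ?_)
    obtain ⟨hj1, hjd⟩ := Finset.mem_Icc.1 hj
    rw [ih (r - j) (by omega) (by omega)]

end Recurrence

section Derivation

variable {k A M : Type*} [CommRing k] [CommRing A] [Algebra k A] [AddCommGroup M]
  [Module k M] [Module A M] (D : Derivation k A M) (t : Aˣ)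

lemma derivation_units_zpow (s : ℤ) : D ↑(t ^ s) = s • (↑(t ^ (s - 1)) : A) • D t := by
  have hpow : ∀ i : ℕ, D ↑(t ^ (i : ℤ)) = (i : ℤ) • (↑(t ^ ((i : ℤ) - 1)) : A) • D t
    | 0 => by simp
    | i + 1 => by
      rw [zpow_natCast, Units.val_pow_eq_pow_val, D.leibniz_pow, natCast_zsmul, Nat.cast_add_one,
        add_sub_cancel_right, add_tsub_cancel_right, zpow_natCast, Units.val_pow_eq_pow_val]
  obtain ⟨i, rfl | rfl⟩ := s.eq_nat_or_neg
  · exact hpow i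
  · have hinv : (↑(t ^ (-(i : ℤ))) : A) * ↑(t ^ (i : ℤ)) = 1 := by
      rw [zpow_neg, Units.inv_mul]
    have hexp : (↑(t ^ (-(i : ℤ))) : A) ^ 2 * ↑(t ^ ((i : ℤ) - 1)) = ↑(t ^ (-(i : ℤ) - 1)) := by
      rw [pow_two, ← Units.val_mul, ← Units.val_mul, ← zpow_add, ← zpow_add]
      ring_nf
    rw [D.leibniz_of_mul_eq_one hinv, hpow, smul_comm, smul_smul, neg_mul, hexp, neg_smul,
      neg_smul, smul_neg]

lemma derivation_two_mul_zpow_mul_cube (u : A) (m : ℤ) :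
    D (2 * (↑(t ^ (1 - m)) * u ^ 3)) =
      (3 * ↑(t ^ (1 - m)) * u) • D (u ^ 2) +
        (2 * (1 - m) * ↑(t ^ (-m)) * u * u ^ 2) • D t := by
  have hsub : 1 - m - 1 = -m := by ring
  rw [two_mul, map_add, D.leibniz, derivation_units_zpow, hsub]
  simp only [D.leibniz_pow]
  module

lemma smul_derivation_zpow_add_smul (u : A) (m j : ℤ) :
    (3 * ↑(t ^ (1 - m)) * u) • D ↑(t ^ j) + (2 * (1 - m) * ↑(t ^ (-m)) * u * ↑(t ^ j)) • D t =
      (3 * j - 2 * m + 2) • (↑(t ^ (-(m - j))) * u) • D t := by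
  have hderiv : (↑(t ^ (1 - m)) : A) * ↑(t ^ (j - 1)) = ↑(t ^ (-(m - j))) := by
    rw [← Units.val_mul, ← zpow_add]
    ring_nf
  have hmul : (↑(t ^ (-m)) : A) * ↑(t ^ j) = ↑(t ^ (-(m - j))) := by
    rw [← Units.val_mul, ← zpow_add]
    ring_nf
  rw [derivation_units_zpow, ← Int.cast_smul_eq_zsmul A, ← Int.cast_smul_eq_zsmul A]
  simp only [smul_smul, ← add_smul]
  congr 1
  push_cast
  linear_combination 3 * u * j * hderiv + 2 * (1 - m) * u * hmul

end Derivation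

section HyperellipticForms

variable {k A M : Type*} [CommRing k] [CommRing A] [Algebra k A] [AddCommGroup M]
  [Module k M] [Module A M]

/-- The class of `t^{-m} u dt` modulo exact forms, for an arbitrary derivation `D` in the role of
`d`; the `D`-exact forms are the range of `D`. -/
def formClass (D : Derivation k A M) (t : Aˣ) (u : A) (m : ℤ) :
    M ⧸ LinearMap.range D.toLinearMap :=
  Submodule.Quotient.mk ((↑(t ^ (-m)) * u) • D t)

/-- The coefficient of `t^{j-m} u dt` in `d(2 t^{1-m} u³)` when `u² = ∑ⱼ aⱼ tʲ`. -/
def formCoeff (a : ℕ → k) (m : ℤ) (j : ℕ) : k := ((3 * (j : ℤ) - 2 * m + 2 : ℤ) : k) * a j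

lemma formCoeff_zero (a : ℕ → k) (m : ℤ) :
    formCoeff a m 0 = ((-2 * (m - 1) : ℤ) : k) * a 0 := by
  rw [formCoeff, Nat.cast_zero]
  ring_nf

lemma isUnit_formCoeff_zero [Algebra ℚ k] {a : ℕ → k} (ha0 : IsUnit (a 0)) {m : ℤ} (hm : m ≠ 1) :
    IsUnit (formCoeff a m 0) := by
  have hcast : ((-2 * (m - 1) : ℤ) : ℚ) ≠ 0 := Int.cast_ne_zero.2 (by omega)
  rw [formCoeff_zero, ← map_intCast (algebraMap ℚ k)]
  exact (hcast.isUnit.map (algebraMap ℚ k)).mul ha0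

variable [IsScalarTower k A M] (D : Derivation k A M) (t : Aˣ)

lemma derivation_two_mul_zpow_mul_cube_eq_sum {u : A} {s : Finset ℕ} {a : ℕ → k}
    (hu : u ^ 2 = ∑ j ∈ s, a j • (t : A) ^ j) (m : ℤ) :
    D (2 * (↑(t ^ (1 - m)) * u ^ 3)) =
      ∑ j ∈ s, formCoeff a m j • (↑(t ^ (-(m - j))) * u) • D t := by
  rw [derivation_two_mul_zpow_mul_cube, hu, map_sum, Finset.smul_sum, Finset.mul_sum,
    Finset.sum_smul, ← Finset.sum_add_distrib]
  refine Finset.sum_congr rfl fun j _ => ?_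
  rw [D.map_smul, smul_comm _ (a j), mul_smul_comm, smul_assoc, ← smul_add,
    ← Units.val_pow_eq_pow_val, ← zpow_natCast, smul_derivation_zpow_add_smul, formCoeff,
    mul_comm (Int.cast _) (a j), mul_smul (a j), Int.cast_smul_eq_zsmul]

lemma satisfiesRecurrence_formClass {u : A} {d : ℕ} {a : ℕ → k}
    (hu : u ^ 2 = ∑ j ∈ Finset.range (d + 1), a j • (t : A) ^ j) :
    SatisfiesRecurrence d (formCoeff a) (formClass D t u) := by
  intro m _
  simp only [formClass, ← Submodule.mkQ_apply, ← map_smul, ← map_sum]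
  rw [← derivation_two_mul_zpow_mul_cube_eq_sum D t hu, Submodule.mkQ_apply,
    Submodule.Quotient.mk_eq_zero]
  exact ⟨_, rfl⟩

theorem statement7_general [Algebra ℚ k] {d : ℕ} (hd : 1 ≤ d) {a : ℕ → k} (ha0 : IsUnit (a 0))
    {u : A} (hu : u ^ 2 = ∑ j ∈ Finset.range (d + 1), a j • (t : A) ^ j)
    (Q : ℤ → ℤ → k)
    (hQinit : ∀ m i : ℤ, -(d : ℤ) ≤ i → i ≤ -1 → 1 ≤ m → m ≤ (d : ℤ) →
      Q m i = if m = -i then 1 else 0)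
    (hQrec : ∀ m i : ℤ, -(d : ℤ) ≤ i → i ≤ -1 → (d : ℤ) + 1 ≤ m →
      ((-2 * (m - 1) : ℤ) : k) * a 0 * Q m i =
        -∑ j ∈ Finset.Icc 1 d, ((3 * (j : ℤ) - 2 * m + 2 : ℤ) : k) * a j * Q (m - j) i)
    (r : ℤ) (hr : 1 ≤ r) :
    formClass D t u r = ∑ i ∈ Finset.Icc 1 d, Q r (-(i : ℤ)) • formClass D t u i := by
  have hQ : ∀ i ∈ Finset.Icc 1 d,
      SatisfiesRecurrence d (formCoeff a) fun m => Q m (-(i : ℤ)) := by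
    intro i hi
    obtain ⟨hi1, hid⟩ := Finset.mem_Icc.1 hi
    refine satisfiesRecurrence_iff.2 fun m hm => ?_
    rw [formCoeff_zero]
    exact hQrec m _ (by omega) (by omega) hm
  refine (satisfiesRecurrence_formClass D t hu).eq_of_eq_initial
    (SatisfiesRecurrence.sum_smul hQ fun i => formClass D t u i)
    (fun m hm => (isUnit_formCoeff_zero ha0 (by omega)).isSMulRegular _) (fun m hm1 hmd => ?_) hr
  lift m to ℕ using by omega
  have hmem : m ∈ Finset.Icc 1 d := Finset.mem_Icc.2 (by omega)
  rw [Finset.sum_eq_single_of_mem m hmem fun i hi him => ?_]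
  · rw [hQinit m _ (by omega) (by omega) hm1 hmd, if_pos (neg_neg _).symm, one_smul]
  · obtain ⟨hi1, hid⟩ := Finset.mem_Icc.1 hi
    rw [hQinit m _ (by omega) (by omega) hm1 hmd, if_neg (by omega), zero_smul]

end HyperellipticForms

section HyperRing

/-- The element `t` of `R` as a unit, with inverse `t⁻¹`. -/
def tUnit : (HyperRing n a)ˣ :=
  Units.map (algebraMap (LaurentPolynomial ℂ) (HyperRing n a) : LaurentPolynomial ℂ →* _)
    (isUnit_T 1).unit

lemma coe_tUnit : (tUnit n a : HyperRing n a) = tpow n a 1 := rfl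

lemma tpow_one_pow (i : ℕ) : tpow n a 1 ^ i = tpow n a i := by
  rw [← map_pow, T_pow, mul_one]

lemma coe_tUnit_zpow (i : ℤ) : (↑(tUnit n a ^ i) : HyperRing n a) = tpow n a i := by
  obtain ⟨i, rfl | rfl⟩ := i.eq_nat_or_neg
  · rw [zpow_natCast, Units.val_pow_eq_pow_val, coe_tUnit, tpow_one_pow]
  · rw [zpow_neg, zpow_natCast]
    apply Units.inv_eq_of_mul_eq_one_right
    rw [Units.val_pow_eq_pow_val, coe_tUnit, tpow_one_pow, ← map_mul, ← T_add, add_neg_cancel,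
      T_zero, map_one]

lemma toLaurent_pPoly :
    (pPoly n a).toLaurent = ∑ j ∈ Finset.range (n + 1), a j • (T j : LaurentPolynomial ℂ) := by
  simp only [pPoly, map_sum, toLaurent_C_mul_X_pow, LaurentPolynomial.smul_eq_C_mul]

lemma uElt_sq :
    uElt n a ^ 2 = ∑ j ∈ Finset.range (n + 1), a j • (tUnit n a : HyperRing n a) ^ j := by
  let ι := IsScalarTower.toAlgHom ℂ (LaurentPolynomial ℂ) (HyperRing n a)
  have hroot : uElt n a ^ 2 = ι (pPoly n a).toLaurent := by
    have h := AdjoinRoot.eval₂_root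
      ((X : (LaurentPolynomial ℂ)[X]) ^ 2 - Polynomial.C (pPoly n a).toLaurent)
    rwa [eval₂_sub, eval₂_pow, eval₂_X, Polynomial.eval₂_C, sub_eq_zero] at h
  calc uElt n a ^ 2
      = ι (∑ j ∈ Finset.range (n + 1), a j • (T j : LaurentPolynomial ℂ)) :=
        hroot.trans (congrArg ι (toLaurent_pPoly n a))
    _ = ∑ j ∈ Finset.range (n + 1), a j • tpow n a j := by
        simp only [map_sum, map_smul, ι, IsScalarTower.coe_toAlgHom']
    _ = ∑ j ∈ Finset.range (n + 1), a j • (tUnit n a : HyperRing n a) ^ j := by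
        simp only [coe_tUnit, tpow_one_pow]

end HyperRing

/-- For every integer `r ≥ 1`, `\overline{t⁻ʳ u dt} = ∑_{k=1}^{n} Q_{r,−k}·ω_k` in `Ω¹_R/dR`,
where the scalars `Q_{m,i}` (for `−n ≤ i ≤ −1`) are determined by the initial conditions
`Q_{m,i} = δ_{m,−i}` for `1 ≤ m ≤ n` and the recursion
`−2(m−1)·a₀·Q_{m,i} = −∑_{j=1}^{n} (3j−2m+2)·a_j·Q_{m−j,i}` for `m ≥ n+1`. -/
theorem statement7 (hn : 1 ≤ n) (han : a n = 1) (ha0 : a 0 ≠ 0)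
    (hsep : (pPoly n a).Separable)
    (Q : ℤ → ℤ → ℂ)
    (hQinit : ∀ m i : ℤ, -(n : ℤ) ≤ i → i ≤ -1 → 1 ≤ m → m ≤ (n : ℤ) →
      Q m i = if m = -i then 1 else 0)
    (hQrec : ∀ m i : ℤ, -(n : ℤ) ≤ i → i ≤ -1 → (n : ℤ) + 1 ≤ m →
      ((-2 * (m - 1) : ℤ) : ℂ) * a 0 * Q m i =
        -∑ j ∈ Finset.Icc 1 n,
          ((3 * (j : ℤ) - 2 * m + 2 : ℤ) : ℂ) * a j * Q (m - j) i) :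
    ∀ r : ℤ, 1 ≤ r →
      fdg n a (tpow n a (-r) * uElt n a) (tpow n a 1) =
        ∑ k ∈ Finset.Icc 1 n, Q r (-(k : ℤ)) • ωk n a k := by
  simpa only [formClass, coe_tUnit, coe_tUnit_zpow] using
    statement7_general (KaehlerDifferential.D ℂ (HyperRing n a)) (tUnit n a) hn ha0.isUnit
      (uElt_sq n a) Q hQinit hQrec
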